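/- Let m ≥ 2 be an integer and t > 0. Then for every k ∈ ℕ and every u ∈ [−1,1]: |h_{m,k}^t(u)| ≤ e^{−(k²/3 + k(m−1))t/2} · 2^{21} · (k+m−2)^{3m+5}, and h_{m,k}^t(u) = 0 for k = 0,1,2,3,4,5. -/

import Mathlib

/-- The Gegenbauer polynomials `C_l^α`, defined by the recurrence
`C_0^α(u) = 1`, `C_1^α(u) = 2αu`, and
`C_l^α(u) = (2u(l+α−1)C_{l−1}^α(u) − (l+2α−2)C_{l−2}^α(u))/l` for `l ≥ 2`. -/
noncomputable def gegenbauer (α : ℝ) : ℕ → ℝ → ℝ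
  | 0, _ => 1
  | 1, u => 2 * α * u
  | (l + 2), u =>
      (2 * u * (((l : ℝ) + 2) + α - 1) * gegenbauer α (l + 1) u
        - (((l : ℝ) + 2) + 2 * α - 2) * gegenbauer α l u) / ((l : ℝ) + 2)

/-- `c_{m,l}^t(u)`: the coefficient functions of the heat kernel expansion on `ℝP^m`,
zero for `l` odd or `l = 0`. -/
noncomputable def cmt (m : ℕ) (t : ℝ) (l : ℕ) (u : ℝ) : ℝ :=
  if l % 2 = 0 ∧ l ≠ 0 then
    Real.exp (-((l : ℝ) * ((l : ℝ) + (m : ℝ) - 1)) * t / 2)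
      * ((2 * (l : ℝ) + (m : ℝ) - 1) / ((m : ℝ) - 1))
      * gegenbauer (((m : ℝ) - 1) / 2) l u
  else 0

/-- `d_{m,n}^t(u) := Σ_{l=0}^n c_{m,l}^t(u)·c_{m,n−l}^t(u)` (Cauchy product coefficients). -/
noncomputable def dmt (m : ℕ) (t : ℝ) (n : ℕ) (u : ℝ) : ℝ :=
  ∑ l ∈ Finset.range (n + 1), cmt m t l u * cmt m t (n - l) u

/-- `h_{m,k}^t(u) := Σ_{n=0}^k d_{m,n}^t(u)·c_{m,k−n}^t(u)` (triple Cauchy product coefficients). -/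
noncomputable def hmt (m : ℕ) (t : ℝ) (k : ℕ) (u : ℝ) : ℝ :=
  ∑ n ∈ Finset.range (k + 1), dmt m t n u * cmt m t (k - n) u

/-- Coefficients of `(1 - zX)^{-α}`. -/
noncomputable def gegA (α : ℝ) (n : ℕ) : ℝ :=
  ∏ i ∈ Finset.range n, ((α + i) / ((i : ℝ) + 1))

theorem gegA_succ (α : ℝ) (n : ℕ) : gegA α (n + 1) * ((n : ℝ) + 1) = (α + n) * gegA α n := by
  unfold gegA
  rw [Finset.prod_range_succ]
  have : (n : ℝ) + 1 ≠ 0 := by positivity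
  field_simp

theorem gegA_nonneg (α : ℝ) (hα : 0 ≤ α) (n : ℕ) : 0 ≤ gegA α n := by
  unfold gegA
  exact Finset.prod_nonneg fun i _ => by positivity

noncomputable def gegP (α : ℝ) (z : ℂ) : PowerSeries ℂ :=
  PowerSeries.mk fun n => (gegA α n : ℂ) * z ^ n

theorem gegP_ode (α : ℝ) (z : ℂ) :
    (1 - PowerSeries.C z * PowerSeries.X) * PowerSeries.derivative ℂ (gegP α z)
      = PowerSeries.C ((α : ℂ) * z) * gegP α z := by
  ext n
  have key : ∀ n : ℕ, (gegA α (n + 1) : ℂ) * ((n : ℂ) + 1) = ((α : ℂ) + n) * gegA α n := by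
    intro n
    exact_mod_cast gegA_succ α n
  rw [sub_mul, one_mul, map_sub, mul_assoc, PowerSeries.coeff_C_mul, PowerSeries.coeff_C_mul,
    PowerSeries.coeff_derivative]
  cases n with
  | zero =>
    have := key 0
    simp [gegP] at this ⊢
    rw [this]; ring
  | succ n =>
    rw [PowerSeries.coeff_succ_X_mul, PowerSeries.coeff_derivative]
    have := key (n + 1)
    simp only [gegP, PowerSeries.coeff_mk]
    push_cast at this ⊢
    linear_combination z ^ (n + 2) * this

theorem gegB_ode (α : ℝ) (z w : ℂ) (u : ℝ) (hzw : z * w = 1) (hs : z + w = 2 * u) :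
    (1 - PowerSeries.C (2 * (u : ℂ)) * PowerSeries.X + PowerSeries.X * PowerSeries.X)
        * PowerSeries.derivative ℂ (gegP α z * gegP α w)
      = (PowerSeries.C (2 * (α : ℂ) * u) - PowerSeries.C (2 * (α : ℂ)) * PowerSeries.X)
        * (gegP α z * gegP α w) := by
  have h1 := gegP_ode α z
  have h2 := gegP_ode α w
  have hC : PowerSeries.C (R := ℂ) z * PowerSeries.C w = 1 := by rw [← map_mul, hzw, map_one]
  have hS : PowerSeries.C (R := ℂ) z + PowerSeries.C w = PowerSeries.C (2 * (u : ℂ)) := by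
    rw [← map_add, hs]
  have hD : PowerSeries.derivative ℂ (gegP α z * gegP α w)
      = gegP α z * PowerSeries.derivative ℂ (gegP α w)
        + gegP α w * PowerSeries.derivative ℂ (gegP α z) := by
    rw [Derivation.leibniz]; simp [smul_eq_mul]
  have e2 : PowerSeries.C (R := ℂ) (2 * (α : ℂ) * u)
      = PowerSeries.C (α : ℂ) * (PowerSeries.C z + PowerSeries.C w) := by
    rw [hS, ← map_mul]; congr 1; ring
  have e3 : PowerSeries.C (R := ℂ) (2 * (α : ℂ)) = 2 * PowerSeries.C (α : ℂ) := by
    rw [map_mul]; congr 1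
  rw [map_mul] at h1 h2
  rw [hD, ← hS, e2, e3]
  generalize PowerSeries.derivative ℂ (gegP α z) = dP at *
  generalize PowerSeries.derivative ℂ (gegP α w) = dQ at *
  generalize gegP α z = P at *
  generalize gegP α w = Q at *
  generalize PowerSeries.C (R := ℂ) z = Z at *
  generalize PowerSeries.C (R := ℂ) w = W at *
  generalize PowerSeries.C (R := ℂ) (α : ℂ) = a at *
  generalize (PowerSeries.X : PowerSeries ℂ) = X at *
  linear_combination (1 - W * X) * Q * h1 + (1 - Z * X) * P * h2
    - (X * X * (P * dQ + Q * dP)) * hC - 2 * a * X * P * Q * hC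

theorem geg_eq_coeff (α : ℝ) (z w : ℂ) (u : ℝ) (hzw : z * w = 1) (hs : z + w = 2 * u) (n : ℕ) :
    (gegenbauer α n u : ℂ) = PowerSeries.coeff n (gegP α z * gegP α w) := by
  have ode := gegB_ode α z w u hzw hs
  set B := gegP α z * gegP α w with hB
  have c0 : PowerSeries.coeff 0 B = 1 := by
    simp [hB, gegP, gegA, PowerSeries.coeff_mul]
  induction n using Nat.strong_induction_on with
  | _ n ih =>
    match n with
    | 0 => rw [c0]; simp [gegenbauer]
    | 1 =>
      have h := congrArg (PowerSeries.coeff 0) ode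
      rw [add_mul, sub_mul, sub_mul, mul_assoc (PowerSeries.C _) PowerSeries.X,
        mul_assoc (PowerSeries.C _) PowerSeries.X, mul_assoc PowerSeries.X PowerSeries.X] at h
      simp only [map_add, map_sub, PowerSeries.coeff_C_mul, one_mul, PowerSeries.coeff_derivative,
        PowerSeries.coeff_zero_X_mul, c0] at h
      simp [gegenbauer] at h ⊢
      rw [h]
    | n + 2 =>
      have h := congrArg (PowerSeries.coeff (n + 1)) ode
      rw [add_mul, sub_mul, sub_mul, mul_assoc (PowerSeries.C _) PowerSeries.X,
        mul_assoc (PowerSeries.C _) PowerSeries.X, mul_assoc PowerSeries.X PowerSeries.X] at h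
      simp only [map_add, map_sub, PowerSeries.coeff_C_mul, one_mul, PowerSeries.coeff_derivative,
        PowerSeries.coeff_succ_X_mul] at h
      have h0 := ih n (by omega)
      have h1 := ih (n + 1) (by omega)
      have hne : (n : ℂ) + 2 ≠ 0 := by exact_mod_cast (by omega : n + 2 ≠ 0)
      rw [gegenbauer]
      push_cast
      rw [h0, h1, div_eq_iff hne]
      have h3 : PowerSeries.coeff n (PowerSeries.X * PowerSeries.derivative ℂ B)
          = PowerSeries.coeff n B * n := by
        cases n with
        | zero => simp
        | succ k => rw [PowerSeries.coeff_succ_X_mul, PowerSeries.coeff_derivative]; push_cast; ring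
      rw [h3] at h
      push_cast at h
      linear_combination -h

theorem geg_abs_le (α : ℝ) (hα : 0 ≤ α) (n : ℕ) (u : ℝ) (hu : u ∈ Set.Icc (-1 : ℝ) 1) :
    |gegenbauer α n u| ≤ gegenbauer α n 1 := by
  obtain ⟨hu1, hu2⟩ := hu
  have h1 : (gegenbauer α n 1 : ℂ)
      = ((∑ p ∈ Finset.HasAntidiagonal.antidiagonal n, gegA α p.1 * gegA α p.2 : ℝ) : ℂ) := by
    rw [geg_eq_coeff α 1 1 1 (by norm_num) (by norm_num), PowerSeries.coeff_mul]
    simp [gegP]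
  have h1' := Complex.ofReal_injective h1
  have hsq : (Real.sqrt (1 - u ^ 2)) ^ 2 = 1 - u ^ 2 := Real.sq_sqrt (by nlinarith)
  set s := Real.sqrt (1 - u ^ 2) with hs
  have hn : ∀ r : ℝ, r ^ 2 = 1 - u ^ 2 → ‖(⟨u, r⟩ : ℂ)‖ = 1 := by
    intro r hr
    rw [Complex.norm_def, Complex.normSq_mk]
    rw [show u * u + r * r = 1 by nlinarith]; simp
  have hz := hn s hsq
  have hw := hn (-s) (by rw [neg_sq, hsq])
  have hg := geg_eq_coeff α ⟨u, s⟩ ⟨u, -s⟩ u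
    (by apply Complex.ext <;> simp <;> nlinarith)
    (by apply Complex.ext <;> simp; ring) n
  rw [PowerSeries.coeff_mul] at hg
  have : |gegenbauer α n u| = ‖(gegenbauer α n u : ℂ)‖ := by simp
  rw [this, hg, h1']
  refine (norm_sum_le _ _).trans (Finset.sum_le_sum fun p _ => ?_)
  simp [gegP, hz, hw, abs_of_nonneg (gegA_nonneg α hα _)]

theorem geg_one_succ (α : ℝ) (n : ℕ) :
    ((n : ℝ) + 1) * gegenbauer α (n + 1) 1 = (n + 2 * α) * gegenbauer α n 1 := by
  induction n with
  | zero => simp [gegenbauer]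
  | succ n ih =>
    rw [gegenbauer]
    have : (n : ℝ) + 2 ≠ 0 := by positivity
    push_cast
    rw [show (n : ℝ) + 1 + 1 = n + 2 by ring, mul_div_cancel₀ _ this]
    linear_combination ih

theorem geg_one (q : ℕ) (n : ℕ) :
    gegenbauer (((q : ℝ) + 1) / 2) n 1 = (Nat.choose (n + q) n : ℝ) := by
  induction n with
  | zero => simp [gegenbauer]
  | succ n ih =>
    have h := geg_one_succ (((q : ℝ) + 1) / 2) n
    rw [ih] at h
    have h2 : ((n + q : ℕ) + 1 : ℝ) * (Nat.choose (n + q) n : ℝ)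
        = (Nat.choose (n + q + 1) (n + 1) : ℝ) * ((n : ℝ) + 1) := by
      exact_mod_cast Nat.add_one_mul_choose_eq (n + q) n
    have hne : (n : ℝ) + 1 ≠ 0 := by positivity
    apply mul_left_cancel₀ hne
    rw [h, show n + 1 + q = n + q + 1 by ring]
    push_cast at h2
    linear_combination h2

theorem geg_bound (q n : ℕ) (u : ℝ) (hu : u ∈ Set.Icc (-1 : ℝ) 1) :
    |gegenbauer (((q : ℝ) + 1) / 2) n u| ≤ ((n : ℝ) + q) ^ q := by
  refine (geg_abs_le _ (by positivity) n u hu).trans ?_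
  rw [geg_one, Nat.choose_symm_add]
  exact_mod_cast Nat.choose_le_pow (n + q) q

theorem cmt_bound (q k l : ℕ) (hk : 1 ≤ k) (hl : l ≤ k) (t u : ℝ)
    (hu : u ∈ Set.Icc (-1 : ℝ) 1) :
    |cmt (q + 2) t l u| ≤ Real.exp (-((l : ℝ) * ((l : ℝ) + q + 1)) * t / 2)
      * (3 * ((k : ℝ) + q) ^ (q + 1)) := by
  unfold cmt
  have hk' : (1 : ℝ) ≤ k := by exact_mod_cast hk
  have hl' : (l : ℝ) ≤ k := by exact_mod_cast hl
  have hq : (0 : ℝ) ≤ q := by positivity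
  split_ifs with h
  · have e1 : (((q + 2 : ℕ) : ℝ) - 1) = q + 1 := by push_cast; ring
    have e2 : ((l : ℝ) + ((q + 2 : ℕ) : ℝ) - 1) = l + q + 1 := by push_cast; ring
    have e3 : (2 * (l : ℝ) + ((q + 2 : ℕ) : ℝ) - 1) = 2 * l + q + 1 := by push_cast; ring
    rw [e1, e2, e3, abs_mul, abs_mul, Real.abs_exp, mul_assoc]
    refine mul_le_mul_of_nonneg_left ?_ (Real.exp_nonneg _)
    rw [abs_of_nonneg (by positivity), pow_succ' , ← mul_assoc]
    refine mul_le_mul ?_ ((geg_bound q l u hu).trans ?_) (abs_nonneg _) (by positivity)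
    · rw [div_le_iff₀ (by positivity)]
      have : (0 : ℝ) ≤ l := by positivity
      nlinarith
    · gcongr
  · rw [abs_zero]; positivity

theorem term_bound (q k n l : ℕ) (hk : 1 ≤ k) (hn : n ≤ k) (hl : l ≤ n) (t u : ℝ) (ht : 0 < t)
    (hu : u ∈ Set.Icc (-1 : ℝ) 1) :
    |cmt (q + 2) t l u * cmt (q + 2) t (n - l) u * cmt (q + 2) t (k - n) u|
      ≤ Real.exp (-(((k : ℝ)^2 / 3) + (k : ℝ) * ((q : ℝ) + 1)) * t / 2)
        * (27 * ((k : ℝ) + q) ^ (3 * q + 3)) := by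
  have b1 := cmt_bound q k l hk (by omega) t u hu
  have b2 := cmt_bound q k (n - l) hk (by omega) t u hu
  have b3 := cmt_bound q k (k - n) hk (by omega) t u hu
  rw [abs_mul, abs_mul]
  have hb := mul_le_mul (mul_le_mul b1 b2 (abs_nonneg _) (by positivity)) b3 (abs_nonneg _)
    (by positivity)
  refine hb.trans ?_
  rw [Nat.cast_sub hl, Nat.cast_sub hn]
  set E1 := -((l : ℝ) * ((l : ℝ) + q + 1)) * t / 2 with hE1
  set E2 := -(((n : ℝ) - l) * (((n : ℝ) - l) + q + 1)) * t / 2 with hE2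
  set E3 := -(((k : ℝ) - n) * (((k : ℝ) - n) + q + 1)) * t / 2 with hE3
  have hexp : Real.exp E1 * Real.exp E2 * Real.exp E3
      ≤ Real.exp (-(((k : ℝ)^2 / 3) + (k : ℝ) * ((q : ℝ) + 1)) * t / 2) := by
    rw [← Real.exp_add, ← Real.exp_add]
    apply Real.exp_le_exp.mpr
    have hsq : (k : ℝ) ^ 2 / 3 ≤ (l : ℝ) ^ 2 + ((n : ℝ) - l) ^ 2 + ((k : ℝ) - n) ^ 2 := by
      nlinarith [sq_nonneg ((l : ℝ) - (n - l)), sq_nonneg ((l : ℝ) - (k - n)),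
        sq_nonneg (((n : ℝ) - l) - (k - n))]
    rw [hE1, hE2, hE3]
    nlinarith [mul_le_mul_of_nonneg_right hsq ht.le]
  calc _ = Real.exp E1 * Real.exp E2 * Real.exp E3 * (27 * ((k : ℝ) + q) ^ (3 * q + 3)) := by
        rw [show 3 * q + 3 = (q + 1) + (q + 1) + (q + 1) by ring, pow_add, pow_add]; ring
    _ ≤ _ := mul_le_mul_of_nonneg_right hexp (by positivity)

theorem hmt_zero (m : ℕ) (t u : ℝ) (k : ℕ) (hk : k ≤ 5) : hmt m t k u = 0 := by
  have hc : ∀ l, l < 2 → cmt m t l u = 0 := by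
    intro l hl
    unfold cmt
    rw [if_neg]
    omega
  unfold hmt
  refine Finset.sum_eq_zero fun n hn => ?_
  unfold dmt
  rw [Finset.sum_mul]
  refine Finset.sum_eq_zero fun l hl => ?_
  rw [Finset.mem_range] at hn hl
  by_cases h1 : l < 2
  · rw [hc l h1]; ring
  by_cases h2 : n - l < 2
  · rw [hc _ h2]; ring
  rw [hc (k - n) (by omega)]; ring

/-- For an integer `m ≥ 2` and `t > 0`: for every `k ∈ ℕ` and `u ∈ [−1,1]`,
`|h_{m,k}^t(u)| ≤ e^{−(k²/3+k(m−1))t/2}·2^{21}·(k+m−2)^{3m+5}`, and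
`h_{m,k}^t = 0` for `k = 0,1,2,3,4,5`. -/
theorem hmt_bound (m : ℕ) (hm : 2 ≤ m) (t : ℝ) (ht : 0 < t) :
    (∀ k : ℕ, ∀ u ∈ Set.Icc (-1 : ℝ) 1,
      |hmt m t k u| ≤ Real.exp (-(((k : ℝ)^2 / 3) + (k : ℝ) * ((m : ℝ) - 1)) * t / 2)
        * 2^21 * ((k : ℝ) + (m : ℝ) - 2)^(3 * m + 5)) ∧
    (∀ u ∈ Set.Icc (-1 : ℝ) 1, ∀ k : ℕ, k ≤ 5 → hmt m t k u = 0) := by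
  refine ⟨?_, fun u _ k hk => hmt_zero m t u k hk⟩
  intro k u hu
  obtain ⟨q, rfl⟩ := Nat.exists_eq_add_of_le' hm
  have e1 : (((q + 2 : ℕ) : ℝ) - 1) = q + 1 := by push_cast; ring
  have e2 : ((k : ℝ) + ((q + 2 : ℕ) : ℝ) - 2) = k + q := by push_cast; ring
  rw [e1, e2]
  rcases Nat.lt_or_ge k 1 with hk | hk
  · rw [hmt_zero _ _ _ _ (by omega), abs_zero]; positivity
  set M := Real.exp (-(((k : ℝ)^2 / 3) + (k : ℝ) * ((q : ℝ) + 1)) * t / 2) with hM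
  have hM0 : 0 < M := Real.exp_pos _
  have hk' : (1 : ℝ) ≤ k := by exact_mod_cast hk
  have hq : (0 : ℝ) ≤ q := by positivity
  have hN : (1 : ℝ) ≤ (k : ℝ) + q := by linarith
  set T := M * (27 * ((k : ℝ) + q) ^ (3 * q + 3)) with hT
  have hT0 : 0 ≤ T := by positivity
  have hsum : |hmt (q + 2) t k u| ≤ ((k : ℝ) + 1) * (((k : ℝ) + 1) * T) := by
    unfold hmt
    refine (Finset.abs_sum_le_sum_abs _ _).trans ?_
    have : ∀ n ∈ Finset.range (k + 1),
        |dmt (q + 2) t n u * cmt (q + 2) t (k - n) u| ≤ ((k : ℝ) + 1) * T := by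
      intro n hn
      rw [Finset.mem_range] at hn
      unfold dmt
      rw [Finset.sum_mul]
      refine (Finset.abs_sum_le_sum_abs _ _).trans ?_
      refine (Finset.sum_le_card_nsmul _ _ T fun l hl => ?_).trans ?_
      · rw [Finset.mem_range] at hl
        exact term_bound q k n l hk (by omega) (by omega) t u ht hu
      · rw [Finset.card_range, nsmul_eq_mul]
        refine mul_le_mul_of_nonneg_right ?_ hT0
        exact_mod_cast (by omega : n + 1 ≤ k + 1)
    refine (Finset.sum_le_card_nsmul _ _ _ this).trans ?_
    rw [Finset.card_range, nsmul_eq_mul]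
    push_cast
    exact le_rfl
  refine hsum.trans ?_
  have hk2 : (k : ℝ) + 1 ≤ 2 * (k + q) := by linarith
  calc ((k : ℝ) + 1) * (((k : ℝ) + 1) * T)
      ≤ (2 * (k + q)) * ((2 * (k + q)) * T) := by gcongr
    _ = M * 108 * ((k : ℝ) + q) ^ (3 * q + 5) := by
        rw [hT, show 3 * q + 5 = 3 * q + 3 + 2 by ring, pow_add _ (3 * q + 3) 2]; ring
    _ ≤ M * 2 ^ 21 * ((k : ℝ) + q) ^ (3 * (q + 2) + 5) := by
        refine mul_le_mul ?_ (pow_le_pow_right₀ hN (by omega)) (by positivity) (by positivity)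
        exact mul_le_mul_of_nonneg_left (by norm_num) hM0.le
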